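/- arXiv:2206.01920 — 3 statements merged into one kernel-verified Lean document; each statement's English description precedes it below -/
import Mathlib

section
/- Fix N ≥ 1, and for each ω, η ∈ I^N let α_{ωη}, h_{ωη} : SG' × SG'' → ℝ be continuous functions. Let g, g̃ : SG' × SG'' → ℝ be bounded functions, and suppose G, G̃ : SG' × SG'' → ℝ satisfy, for all ω, η ∈ I^N and (t,s) ∈ SG' × SG'', G(L_ω(t), K_η(s)) = α_{ωη}(t,s)·g(t,s) + h_{ωη}(t,s) and G̃(L_ω(t), K_η(s)) = α_{ωη}(t,s)·g̃(t,s) + h_{ωη}(t,s). Then sup_{(t,s) ∈ SG'×SG''} |G(t,s) − G̃(t,s)| ≤ (max_{ω,η ∈ I^N} ‖α_{ωη}‖_∞) · sup_{(t,s) ∈ SG'×SG''} |g(t,s) − g̃(t,s)|. In particular, if max_{ω,η} ‖α_{ωη}‖_∞ < 1, any two continuous functions satisfying the self-referential equation f(L_ω(t),K_η(s)) = α_{ωη}(t,s)f(t,s) + h_{ωη}(t,s) for all ω,η,(t,s) are equal. -/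
noncomputable section

/-- Points of the plane ℝ². -/
abbrev E2 := EuclideanSpace ℝ (Fin 2)

/-- The contraction `L_i(t) = (t + p_i)/2` of the plane towards the vertex `p i`. -/
def Lmap (p : Fin 3 → E2) (i : Fin 3) (t : E2) : E2 := (2 : ℝ)⁻¹ • (t + p i)

/-- `p 1, p 2, p 3` are the vertices of an equilateral triangle: pairwise distinct
points with all three pairwise distances equal. -/
def IsEquilateral (p : Fin 3 → E2) : Prop :=
  Function.Injective p ∧
    ∀ i j k l : Fin 3, i ≠ j → k ≠ l → dist (p i) (p j) = dist (p k) (p l)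

/-- `S` is the Sierpiński gasket with vertex set `p`: the unique nonempty compact set
invariant under the three contractions `L_i(t) = (t + p_i)/2`. -/
def IsSG (p : Fin 3 → E2) (S : Set E2) : Prop :=
  IsEquilateral p ∧ S.Nonempty ∧ IsCompact S ∧ S = ⋃ i : Fin 3, Lmap p i '' S

/-- For a word `ω = ω₁ω₂…ω_n` over `I = {1,2,3}`, the composition
`L_ω = L_{ω₁} ∘ L_{ω₂} ∘ ⋯ ∘ L_{ω_n}`. -/
def wordMap (p : Fin 3 → E2) {n : ℕ} (ω : Fin n → Fin 3) : E2 → E2 :=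
  (List.ofFn fun k => Lmap p (ω k)).foldr (· ∘ ·) id

lemma exists_wordMap (p : Fin 3 → E2) (S : Set E2) (hS : S = ⋃ i : Fin 3, Lmap p i '' S) :
    ∀ (n : ℕ) (x : E2), x ∈ S → ∃ ω : Fin n → Fin 3, ∃ t ∈ S, wordMap p ω t = x := by
  intro n
  induction n with
  | zero =>
    intro x hx
    exact ⟨Fin.elim0, x, hx, by simp [wordMap]⟩
  | succ n ih =>
    intro x hx
    rw [hS] at hx
    obtain ⟨i, y, hy, rfl⟩ := Set.mem_iUnion.1 hx
    obtain ⟨ω, t, ht, rfl⟩ := ih y hy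
    refine ⟨Fin.cons i ω, t, ht, ?_⟩
    simp [wordMap, List.ofFn_succ]

/-- The Read–Bajraktarević operator is a contraction with contraction factor
`max_{ω,η} ‖α_{ωη}‖_∞`: if `G, G̃` are obtained from bounded functions `g, g̃` via the
self-referential relation, then `sup |G − G̃| ≤ (max ‖α_{ωη}‖_∞) · sup |g − g̃|`.
In particular, when `max ‖α_{ωη}‖_∞ < 1`, two continuous functions satisfying the
self-referential equation on `SG' × SG''` coincide there. -/
theorem stmt_6 (p q : Fin 3 → E2) (SG' SG'' : Set E2)
    (hSG' : IsSG p SG') (hSG'' : IsSG q SG'') (N : ℕ) (hN : 1 ≤ N)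
    (α h : (Fin N → Fin 3) → (Fin N → Fin 3) → E2 × E2 → ℝ)
    (hαcont : ∀ ω η, ContinuousOn (α ω η) (SG' ×ˢ SG''))
    (hhcont : ∀ ω η, ContinuousOn (h ω η) (SG' ×ˢ SG''))
    (c : ℝ) (hc : ∀ ω η : Fin N → Fin 3, ∀ x ∈ SG' ×ˢ SG'', |α ω η x| ≤ c) :
    (∀ g g' G G' : E2 × E2 → ℝ,
      (∃ M : ℝ, ∀ x ∈ SG' ×ˢ SG'', |g x| ≤ M) →
      (∃ M : ℝ, ∀ x ∈ SG' ×ˢ SG'', |g' x| ≤ M) →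
      (∀ ω η : Fin N → Fin 3, ∀ t ∈ SG', ∀ s ∈ SG'',
        G (wordMap p ω t, wordMap q η s) = α ω η (t, s) * g (t, s) + h ω η (t, s)) →
      (∀ ω η : Fin N → Fin 3, ∀ t ∈ SG', ∀ s ∈ SG'',
        G' (wordMap p ω t, wordMap q η s) = α ω η (t, s) * g' (t, s) + h ω η (t, s)) →
      ∀ D : ℝ, (∀ x ∈ SG' ×ˢ SG'', |g x - g' x| ≤ D) →
        ∀ x ∈ SG' ×ˢ SG'', |G x - G' x| ≤ c * D) ∧
    (c < 1 → ∀ f f' : E2 × E2 → ℝ,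
      ContinuousOn f (SG' ×ˢ SG'') → ContinuousOn f' (SG' ×ˢ SG'') →
      (∀ ω η : Fin N → Fin 3, ∀ t ∈ SG', ∀ s ∈ SG'',
        f (wordMap p ω t, wordMap q η s) = α ω η (t, s) * f (t, s) + h ω η (t, s)) →
      (∀ ω η : Fin N → Fin 3, ∀ t ∈ SG', ∀ s ∈ SG'',
        f' (wordMap p ω t, wordMap q η s) = α ω η (t, s) * f' (t, s) + h ω η (t, s)) →
      Set.EqOn f f' (SG' ×ˢ SG'')) := by
  have key : ∀ g g' G G' : E2 × E2 → ℝ,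
      (∀ ω η : Fin N → Fin 3, ∀ t ∈ SG', ∀ s ∈ SG'',
        G (wordMap p ω t, wordMap q η s) = α ω η (t, s) * g (t, s) + h ω η (t, s)) →
      (∀ ω η : Fin N → Fin 3, ∀ t ∈ SG', ∀ s ∈ SG'',
        G' (wordMap p ω t, wordMap q η s) = α ω η (t, s) * g' (t, s) + h ω η (t, s)) →
      ∀ D : ℝ, (∀ x ∈ SG' ×ˢ SG'', |g x - g' x| ≤ D) →
        ∀ x ∈ SG' ×ˢ SG'', |G x - G' x| ≤ c * D := by
    rintro g g' G G' hG hG' D hD ⟨a, b⟩ ⟨ha, hb⟩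
    obtain ⟨ω, t, ht, rfl⟩ := exists_wordMap p SG' hSG'.2.2.2 N a ha
    obtain ⟨η, s, hs, rfl⟩ := exists_wordMap q SG'' hSG''.2.2.2 N b hb
    have hm : (t, s) ∈ SG' ×ˢ SG'' := ⟨ht, hs⟩
    rw [hG ω η t ht s hs, hG' ω η t ht s hs, add_sub_add_right_eq_sub, ← mul_sub, abs_mul]
    exact mul_le_mul (hc ω η _ hm) (hD _ hm) (abs_nonneg _) ((abs_nonneg _).trans (hc ω η _ hm))
  refine ⟨fun g g' G G' _ _ hG hG' => key g g' G G' hG hG', ?_⟩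
  intro hc1 f f' hf hf' hE hE' x hx
  obtain ⟨x0, hx0, hmax⟩ := (hSG'.2.2.1.prod hSG''.2.2.1).exists_isMaxOn ⟨x, hx⟩ (hf.sub hf').abs
  have hD : ∀ y ∈ SG' ×ˢ SG'', |f y - f' y| ≤ |f x0 - f' x0| := fun y hy => hmax hy
  have h1 := key f f' f f' hE hE' _ hD x0 hx0
  have h2 : |f x0 - f' x0| ≤ 0 := by nlinarith [abs_nonneg (f x0 - f' x0)]
  have h3 := abs_nonpos_iff.1 ((hD x hx).trans h2)
  linarith
end
end

section
/- Fix N ≥ 1 and write a = 1/2^N; suppose ‖(t,s) − (t',s')‖_2 ≤ 1 for all (t,s),(t',s') ∈ SG' × SG''. Let f : SG' × SG'' → ℝ be the continuous function satisfying f(L_ω(t),K_η(s)) = α_{ωη}(t,s)·f(t,s) + h_{ωη}(t,s) for all ω,η ∈ I^N and (t,s) ∈ SG' × SG''. Suppose each h_{ωη} is Hölder continuous with exponent s_h ∈ (0,1] and constant K_h, and each α_{ωη} is Hölder continuous with exponent s_{α_{ωη}} ∈ (0,1] and constant K_{α_{ωη}}, with ‖α_{ωη}‖_∞ < 1. Set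 ‖α‖_∞ = max_{ω,η ∈ I^N} ‖α_{ωη}‖_∞, s_α = min_{ω,η} s_{α_{ωη}}, and s = min{s_h, s_α}. If ‖α‖_∞ < 1/2^N, then f is Hölder continuous with exponent s: there is a constant C such that |f(t,s) − f(t',s')| ≤ C·‖(t,s)−(t',s')‖_2^s for all (t,s),(t',s') ∈ SG' × SG''. -/
noncomputable section

/-- The word alphabet `I^N`: words of length `N` over `I = {1,2,3}`. -/
abbrev Word (N : ℕ) := Fin N → Fin 3

/-- The Euclidean (`ℓ²`) distance `‖(t,s) − (t',s')‖₂` on the product `ℝ² × ℝ²`. -/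
def dist2 (x y : E2 × E2) : ℝ := Real.sqrt (dist x.1 y.1 ^ 2 + dist x.2 y.2 ^ 2)

/-- `g` is Hölder continuous on `S` with constant `K` and exponent `β` (with respect
to the Euclidean distance on `ℝ² × ℝ²`). -/
def HolderOn2 (S : Set (E2 × E2)) (g : E2 × E2 → ℝ) (K β : ℝ) : Prop :=
  ∀ x ∈ S, ∀ y ∈ S, |g x - g y| ≤ K * dist2 x y ^ β

/-- The sup-norm `‖g‖_∞ = sup_{x ∈ S} |g x|` of a function on `S`. -/
noncomputable def supAbs (S : Set (E2 × E2)) (g : E2 × E2 → ℝ) : ℝ :=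
  sSup ((fun x => |g x|) '' S)

lemma aux_Lmap_dist (p : Fin 3 → E2) (i : Fin 3) (t t' : E2) :
    dist (Lmap p i t) (Lmap p i t') = 2⁻¹ * dist t t' := by
  simp [Lmap, dist_smul₀]

lemma aux_Lmap_vertex (p : Fin 3 → E2) (i : Fin 3) : Lmap p i (p i) = p i := by
  simp only [Lmap, ← two_smul ℝ (p i), smul_smul]
  norm_num

lemma aux_Lmap_swap (p : Fin 3 → E2) (i j : Fin 3) : Lmap p i (p j) = Lmap p j (p i) := by
  simp only [Lmap, add_comm]

lemma aux_mem {p : Fin 3 → E2} {S : Set E2} (h : IsSG p S) (i : Fin 3) {t : E2} (ht : t ∈ S) :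
    Lmap p i t ∈ S := by
  rw [h.2.2.2]
  exact Set.mem_iUnion.2 ⟨i, t, ht, rfl⟩

lemma aux_ex {p : Fin 3 → E2} {S : Set E2} (h : IsSG p S) {t : E2} (ht : t ∈ S) :
    ∃ i, ∃ t1 ∈ S, t = Lmap p i t1 := by
  rw [h.2.2.2] at ht
  obtain ⟨i, t1, h1, h2⟩ := Set.mem_iUnion.1 ht
  exact ⟨i, t1, h1, h2.symm⟩

/-- A maximum principle on the gasket. -/
lemma aux_max {p : Fin 3 → E2} {S : Set E2} (h : IsSG p S) (g : E2 → ℝ) (hg : Continuous g)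
    (hh : ∀ i, ∀ t ∈ S, g (Lmap p i t) ≤ g t / 2) : ∀ t ∈ S, g t ≤ 0 := by
  obtain ⟨x, hx, hm⟩ := h.2.2.1.exists_isMaxOn h.2.1 hg.continuousOn
  obtain ⟨i, x1, hx1, rfl⟩ := aux_ex h hx
  intro t ht
  have h1 : g t ≤ _ := hm ht
  have h2 : g x1 ≤ _ := hm hx1
  have h3 := hh i x1 hx1
  linarith

lemma aux_vertex_mem {p : Fin 3 → E2} {S : Set E2} (h : IsSG p S) (j : Fin 3) : p j ∈ S := by
  obtain ⟨x, hx, hm⟩ := h.2.2.1.exists_isMinOn h.2.1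
    (f := fun t => dist t (p j)) (by fun_prop)
  have h1 : dist x (p j) ≤ dist (Lmap p j x) (p j) := hm (aux_mem h j hx)
  have h2 := aux_Lmap_dist p j x (p j)
  rw [aux_Lmap_vertex] at h2
  have h3 : dist x (p j) = 0 := le_antisymm (by linarith) dist_nonneg
  rw [← dist_eq_zero.1 h3]
  exact hx

lemma aux_geom_j {p : Fin 3 → E2} {S : Set E2} (h : IsSG p S) (j : Fin 3) :
    ∃ κ : ℝ, 0 ≤ κ ∧ ∀ i, i ≠ j → ∀ t ∈ S, ∀ t' ∈ S,
      dist t (p j) ≤ κ * dist (Lmap p i t) (Lmap p j t') := by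
  obtain ⟨D, hD, hpD⟩ : ∃ D : ℝ, 0 < D ∧ ∀ a b, dist (p a) (p b) = if a = b then 0 else D := by
    refine ⟨dist (p 0) (p 1), dist_pos.2 fun h0 => by simpa using h.1.1 h0, fun a b => ?_⟩
    split_ifs with hab
    · simp [hab]
    · exact h.1.2 _ _ _ _ hab (by decide)
  set u : E2 := ∑ k, (p j - p k) with hu
  set μ : E2 → ℝ := fun t => 2 / (3 * D ^ 2) * inner ℝ (p j - t) u with hμ
  have hin : ∀ a b, inner ℝ (p j - p a) (p j - p b) =
      (dist (p j) (p a) ^ 2 + dist (p j) (p b) ^ 2 - dist (p a) (p b) ^ 2) / 2 := by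
    intro a b
    rw [dist_eq_norm, dist_eq_norm, dist_eq_norm,
      real_inner_eq_norm_mul_self_add_norm_mul_self_sub_norm_sub_mul_self_div_two]
    have : p j - p a - (p j - p b) = -(p a - p b) := by abel
    rw [this, norm_neg]
    ring
  have hμp : ∀ i, μ (p i) = if i = j then 0 else 1 := by
    intro i
    simp only [hμ, hu, inner_sum, hin, hpD]
    fin_cases j <;> fin_cases i <;> simp [Fin.sum_univ_three] <;> field_simp <;> norm_num
  have hμL : ∀ i t, μ (Lmap p i t) = (μ t + μ (p i)) / 2 := by
    intro i t
    have : p j - Lmap p i t = (2:ℝ)⁻¹ • ((p j - t) + (p j - p i)) := by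
      simp only [Lmap]
      module
    simp only [hμ, this, inner_smul_left, inner_add_left]
    simp
    ring
  have hμc : Continuous μ := by
    simp only [hμ]
    fun_prop
  have hle1 : ∀ t ∈ S, μ t - 1 ≤ 0 := by
    refine aux_max h (fun t => μ t - 1) (by fun_prop) fun i t ht => ?_
    have : μ (p i) ≤ 1 := by rw [hμp]; split_ifs <;> norm_num
    simp only [hμL]
    linarith
  have hdist : ∀ t ∈ S, dist t (p j) - D * μ t ≤ 0 := by
    refine aux_max h (fun t => dist t (p j) - D * μ t) (by fun_prop) fun i t ht => ?_
    have h1 : dist (Lmap p i t) (p j) ≤ dist t (p j) / 2 + dist (p i) (p j) / 2 := by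
      have e : Lmap p i t - p j = (2:ℝ)⁻¹ • ((t - p j) + (p i - p j)) := by
        simp only [Lmap]
        module
      rw [dist_eq_norm, e, norm_smul, dist_eq_norm, dist_eq_norm]
      have := norm_add_le (t - p j) (p i - p j)
      norm_num
      linarith
    have h2 : dist (p i) (p j) = D * μ (p i) := by
      rw [hpD, hμp]; split_ifs <;> simp
    simp only [hμL]
    rw [h2] at h1
    linarith
  refine ⟨D * (2 * (2 / (3 * D ^ 2) * ‖u‖)), by positivity, fun i hij t ht t' ht' => ?_⟩
  have hlip : μ (Lmap p i t) - μ (Lmap p j t') ≤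
      2 / (3 * D ^ 2) * ‖u‖ * dist (Lmap p i t) (Lmap p j t') := by
    have e : μ (Lmap p i t) - μ (Lmap p j t') =
        2 / (3 * D ^ 2) * inner ℝ (Lmap p j t' - Lmap p i t) u := by
      simp only [hμ, inner_sub_left]
      ring
    rw [e, mul_assoc]
    refine mul_le_mul_of_nonneg_left ?_ (by positivity)
    refine (real_inner_le_norm _ _).trans (le_of_eq ?_)
    rw [dist_comm, dist_eq_norm, mul_comm]
  rw [hμL, hμL, hμp, hμp, if_neg hij, if_pos rfl] at hlip
  have h1 := hle1 t' ht'
  have h2 := hdist t ht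
  have h3 : μ t ≤ 2 * (2 / (3 * D ^ 2) * ‖u‖ * dist (Lmap p i t) (Lmap p j t')) := by linarith
  have h4 := mul_le_mul_of_nonneg_left h3 hD.le
  linarith

lemma aux_geom {p : Fin 3 → E2} {S : Set E2} (h : IsSG p S) :
    ∃ κ : ℝ, 0 < κ ∧ ∀ i j, i ≠ j → ∀ t ∈ S, ∀ t' ∈ S,
      dist t (p j) ≤ κ * dist (Lmap p i t) (Lmap p j t') := by
  choose κ h0 hκ using aux_geom_j h
  refine ⟨1 + ∑ j, κ j, by have := Finset.sum_nonneg fun j (_ : j ∈ Finset.univ) => h0 j; linarith,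
    fun i j hij t ht t' ht' => (hκ j i hij t ht t' ht').trans ?_⟩
  refine mul_le_mul_of_nonneg_right ?_ dist_nonneg
  have := Finset.single_le_sum (fun j _ => h0 j) (Finset.mem_univ j)
  linarith

lemma aux_geom_vertex {p : Fin 3 → E2} {S : Set E2} (h : IsSG p S) :
    ∃ c : ℝ, 0 < c ∧ ∀ j, ∀ t ∈ S, (∃ t1 ∈ S, t = Lmap p j t1) ∨ c ≤ dist t (p j) := by
  obtain ⟨κ, hκ, hg⟩ := aux_geom h
  refine ⟨dist (p 0) (p 1) / κ, div_pos (dist_pos.2 fun h0 => by simpa using h.1.1 h0) hκ,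
    fun j t ht => ?_⟩
  obtain ⟨i, t1, ht1, rfl⟩ := aux_ex h ht
  by_cases hij : i = j
  · subst hij; exact Or.inl ⟨t1, ht1, rfl⟩
  · right
    have h1 := hg j i (Ne.symm hij) (p j) (aux_vertex_mem h j) t1 ht1
    rw [aux_Lmap_vertex, dist_comm _ (Lmap p i t1),
      h.1.2 j i 0 1 (Ne.symm hij) (by decide)] at h1
    rw [div_le_iff₀ hκ]
    linarith

/-- Composition of the maps along a list. -/
def aux_Lw (p : Fin 3 → E2) (l : List (Fin 3)) (t : E2) : E2 := l.foldr (Lmap p) t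

lemma aux_Lw_append (p : Fin 3 → E2) (l l' : List (Fin 3)) (t : E2) :
    aux_Lw p (l ++ l') t = aux_Lw p l (aux_Lw p l' t) := by
  simp [aux_Lw]

lemma aux_Lw_cons (p : Fin 3 → E2) (i : Fin 3) (l : List (Fin 3)) (t : E2) :
    aux_Lw p (i :: l) t = Lmap p i (aux_Lw p l t) := rfl

lemma aux_Lw_dist (p : Fin 3 → E2) (l : List (Fin 3)) (t t' : E2) :
    dist t t' = 2 ^ l.length * dist (aux_Lw p l t) (aux_Lw p l t') := by
  induction l with
  | nil => simp [aux_Lw]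
  | cons i l ih =>
    rw [aux_Lw_cons, aux_Lw_cons, aux_Lmap_dist, ih, List.length_cons, pow_succ]
    ring

lemma aux_Lw_vertex (p : Fin 3 → E2) (j : Fin 3) (n : ℕ) :
    aux_Lw p (List.replicate n j) (p j) = p j := by
  induction n with
  | zero => rfl
  | succ n ih => rw [List.replicate_succ, aux_Lw_cons, ih, aux_Lmap_vertex]

lemma aux_wordMap (p : Fin 3 → E2) {n : ℕ} (ω : Fin n → Fin 3) (t : E2) :
    wordMap p ω t = aux_Lw p (List.ofFn ω) t := by
  have : (List.ofFn fun k => Lmap p (ω k)) = (List.ofFn ω).map (Lmap p) := by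
    rw [List.map_ofFn]; rfl
  rw [wordMap, this]
  generalize List.ofFn ω = l
  induction l with
  | nil => rfl
  | cons i l ih => rw [aux_Lw_cons, ← ih]; rfl

lemma aux_Lw_mem {p : Fin 3 → E2} {S : Set E2} (h : IsSG p S) (l : List (Fin 3)) {t : E2}
    (ht : t ∈ S) : aux_Lw p l t ∈ S := by
  induction l with
  | nil => exact ht
  | cons i l ih => exact aux_mem h i ih

lemma aux_Lw_ex {p : Fin 3 → E2} {S : Set E2} (h : IsSG p S) (n : ℕ) :
    ∀ t ∈ S, ∃ l : List (Fin 3), l.length = n ∧ ∃ t1 ∈ S, t = aux_Lw p l t1 := by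
  induction n with
  | zero => exact fun t ht => ⟨[], rfl, t, ht, rfl⟩
  | succ n ih =>
    intro t ht
    obtain ⟨i, t1, ht1, rfl⟩ := aux_ex h ht
    obtain ⟨l, hl, t2, ht2, rfl⟩ := ih t1 ht1
    exact ⟨i :: l, by simp [hl], t2, ht2, rfl⟩

lemma aux_vertex_dich {p : Fin 3 → E2} {S : Set E2} {c : ℝ} (hc : 0 < c)
    (hv : ∀ j, ∀ t ∈ S, (∃ t1 ∈ S, t = Lmap p j t1) ∨ c ≤ dist t (p j)) (j : Fin 3) (n : ℕ) :
    ∀ t ∈ S, (∃ t1 ∈ S, t = aux_Lw p (List.replicate n j) t1) ∨ c / 2 ^ n ≤ dist t (p j) := by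
  induction n with
  | zero => exact fun t ht => Or.inl ⟨t, ht, rfl⟩
  | succ n ih =>
    intro t ht
    rcases hv j t ht with ⟨t1, ht1, rfl⟩ | h1
    · rcases ih t1 ht1 with ⟨t2, ht2, rfl⟩ | h2
      · exact Or.inl ⟨t2, ht2, rfl⟩
      · right
        have := aux_Lmap_dist p j t1 (p j)
        rw [aux_Lmap_vertex] at this
        rw [this, pow_succ, ← div_div]
        linarith
    · right
      exact (div_le_self hc.le (one_le_pow₀ (by norm_num))).trans h1

/-- Two points either share a cell of level `n` or split earlier. -/
lemma aux_split {p : Fin 3 → E2} {S : Set E2} (h : IsSG p S) (n : ℕ) :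
    ∀ t ∈ S, ∀ t' ∈ S, ∃ w : List (Fin 3), ∃ t0 ∈ S, ∃ t0' ∈ S,
      t = aux_Lw p w t0 ∧ t' = aux_Lw p w t0' ∧ (w.length = n ∨ (w.length < n ∧
        ∃ i j, i ≠ j ∧ ∃ x ∈ S, ∃ x' ∈ S, t0 = Lmap p i x ∧ t0' = Lmap p j x')) := by
  induction n with
  | zero => exact fun t ht t' ht' => ⟨[], t, ht, t', ht', rfl, rfl, Or.inl rfl⟩
  | succ n ih =>
    intro t ht t' ht'
    obtain ⟨i, x, hx, rfl⟩ := aux_ex h ht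
    obtain ⟨j, x', hx', rfl⟩ := aux_ex h ht'
    by_cases hij : i = j
    · subst hij
      obtain ⟨w, t0, ht0, t0', ht0', rfl, rfl, hw⟩ := ih x hx x' hx'
      refine ⟨i :: w, t0, ht0, t0', ht0', rfl, rfl, ?_⟩
      rcases hw with hw | ⟨hw, hr⟩
      · left; simp [hw]
      · right; exact ⟨by simpa using hw, hr⟩
    · exact ⟨[], _, ht, _, ht', rfl, rfl, Or.inr ⟨by simp, i, j, hij, x, hx, x', hx', rfl, rfl⟩⟩

lemma aux_onevar {p : Fin 3 → E2} {S : Set E2} (h : IsSG p S) {T : Set E2} (F : E2 → E2 → ℝ)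
    (N : ℕ) (hN : 1 ≤ N) (a B M σ : ℝ) (ha : 0 ≤ a) (haN : a * 2 ^ N < 1) (hB : 0 ≤ B)
    (hσ : 0 < σ) (hσ1 : σ ≤ 1) (hM : ∀ t ∈ S, ∀ s ∈ T, |F t s| ≤ M)
    (hstep : ∀ l : List (Fin 3), l.length = N → ∀ s ∈ T, ∃ s1 ∈ T, ∀ t ∈ S, ∀ t' ∈ S,
      |F (aux_Lw p l t) s - F (aux_Lw p l t') s| ≤ a * |F t s1 - F t' s1| + B * dist t t' ^ σ) :
    ∃ C : ℝ, ∀ t ∈ S, ∀ t' ∈ S, ∀ s ∈ T, |F t s - F t' s| ≤ C * dist t t' ^ σ := by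
  obtain ⟨κ, hκ, hg⟩ := aux_geom h
  obtain ⟨c0, hc0, hv0⟩ := aux_geom_vertex h
  set c := c0 / 2 ^ N with hc
  have hcpos : 0 < c := by positivity
  set M' := 2 * |M| with hM'
  have hosc : ∀ t ∈ S, ∀ t' ∈ S, ∀ s ∈ T, |F t s - F t' s| ≤ M' := by
    intro t ht t' ht' s hs
    have h1 := hM t ht s hs
    have h2 := hM t' ht' s hs
    have h3 := abs_sub (F t s) (F t' s)
    have h4 := le_abs_self M
    linarith
  have hM'0 : 0 ≤ M' := by positivity
  have h2N : (1:ℝ) ≤ 2 ^ N := one_le_pow₀ (by norm_num)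
  set C0 := B * 2 ^ N / (1 - a * 2 ^ N) with hC0
  have hC00 : 0 ≤ C0 := div_nonneg (by positivity) (by linarith)
  have hscal : ∀ C, C0 ≤ C → ∀ d d1 : ℝ, 0 ≤ d → 0 ≤ d1 → d1 ≤ 2 ^ N * d →
      a * (C * d1 ^ σ) + B * d1 ^ σ ≤ C * d ^ σ := by
    intro C hC d d1 hd hd1 hdd
    have hCn : 0 ≤ C := hC00.trans hC
    have e1 : d1 ^ σ ≤ 2 ^ N * d ^ σ := by
      calc d1 ^ σ ≤ (2 ^ N * d) ^ σ := Real.rpow_le_rpow hd1 hdd hσ.le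
        _ = (2 ^ N) ^ σ * d ^ σ := Real.mul_rpow (by positivity) hd
        _ ≤ 2 ^ N * d ^ σ := by
          refine mul_le_mul_of_nonneg_right ?_ (Real.rpow_nonneg hd _)
          calc ((2:ℝ) ^ N) ^ σ ≤ (2 ^ N) ^ (1:ℝ) := Real.rpow_le_rpow_of_exponent_le h2N hσ1
            _ = 2 ^ N := Real.rpow_one _
    have e2 : B * 2 ^ N ≤ C * (1 - a * 2 ^ N) := by
      rw [hC0, div_le_iff₀ (by linarith)] at hC
      exact hC
    calc a * (C * d1 ^ σ) + B * d1 ^ σ = (a * C + B) * d1 ^ σ := by ring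
      _ ≤ (a * C + B) * (2 ^ N * d ^ σ) := mul_le_mul_of_nonneg_left e1 (by positivity)
      _ = ((a * 2 ^ N) * C + B * 2 ^ N) * d ^ σ := by ring
      _ ≤ C * d ^ σ := mul_le_mul_of_nonneg_right (by linarith) (Real.rpow_nonneg hd _)
  set C1 := max C0 (M' / c ^ σ) with hC1
  have hC10 : 0 ≤ C1 := hC00.trans (le_max_left _ _)
  have hbig : ∀ d, c ≤ d → M' ≤ C1 * d ^ σ := by
    intro d hd
    have e0 : 0 < c ^ σ := Real.rpow_pos_of_pos hcpos _
    calc M' = M' / c ^ σ * c ^ σ := by field_simp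
      _ ≤ C1 * c ^ σ := mul_le_mul_of_nonneg_right (le_max_right _ _) e0.le
      _ ≤ C1 * d ^ σ :=
        mul_le_mul_of_nonneg_left (Real.rpow_le_rpow hcpos.le hd hσ.le) hC10
  -- vertex estimate
  have hP0n : ∀ j, ∀ n : ℕ, ∀ t ∈ S, ∀ s ∈ T, c ≤ 2 ^ n * dist t (p j) →
      |F t s - F (p j) s| ≤ C1 * dist t (p j) ^ σ := by
    intro j n
    induction n with
    | zero =>
      intro t ht s hs hd
      exact (hosc t ht _ (aux_vertex_mem h j) s hs).trans (hbig _ (by simpa using hd))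
    | succ n ih =>
      intro t ht s hs hd
      rcases aux_vertex_dich hc0 hv0 j N t ht with ⟨t1, ht1, rfl⟩ | hd'
      · obtain ⟨s1, hs1, hs2⟩ := hstep (List.replicate N j) (by simp) s hs
        have e1 := hs2 t1 ht1 (p j) (aux_vertex_mem h j)
        have e2 := aux_Lw_dist p (List.replicate N j) t1 (p j)
        rw [aux_Lw_vertex] at e1 e2
        rw [List.length_replicate] at e2
        have e3 : c ≤ 2 ^ n * dist t1 (p j) := by
          have : (2:ℝ) ^ 1 ≤ 2 ^ N := pow_le_pow_right₀ (by norm_num) hN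
          calc c ≤ 2 ^ (n+1) * dist (aux_Lw p (List.replicate N j) t1) (p j) := hd
            _ = 2 ^ n * (2 ^ 1 * dist (aux_Lw p (List.replicate N j) t1) (p j)) := by ring
            _ ≤ 2 ^ n * (2 ^ N * dist (aux_Lw p (List.replicate N j) t1) (p j)) := by gcongr
            _ = _ := by rw [e2]
        have e4 := mul_le_mul_of_nonneg_left (ih t1 ht1 s1 hs1 e3) ha
        have e5 := hscal C1 (le_max_left _ _) _ _ dist_nonneg dist_nonneg e2.le
        linarith
      · exact (hosc t ht _ (aux_vertex_mem h j) s hs).trans (hbig _ hd')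
  have hlarge : ∀ b d : ℝ, 0 < d → ∃ n : ℕ, b ≤ 2 ^ n * d := by
    intro b d hd
    obtain ⟨n, hn⟩ := pow_unbounded_of_one_lt (b / d) (by norm_num : (1:ℝ) < 2)
    exact ⟨n, ((div_lt_iff₀ hd).1 hn).le⟩
  have hP0 : ∀ j, ∀ t ∈ S, ∀ s ∈ T, |F t s - F (p j) s| ≤ C1 * dist t (p j) ^ σ := by
    intro j t ht s hs
    rcases (dist_nonneg (x := t) (y := p j)).eq_or_lt with hd | hd
    · rw [dist_eq_zero.1 hd.symm]
      simp [Real.zero_rpow hσ.ne']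
    · obtain ⟨n, hn⟩ := hlarge c _ hd
      exact hP0n j n t ht s hs hn
  have hPm : ∀ w : List (Fin 3), w.length ≤ N → ∀ j, ∀ t ∈ S, ∀ s ∈ T,
      |F (aux_Lw p w t) s - F (aux_Lw p w (p j)) s| ≤ C1 * dist t (p j) ^ σ := by
    intro w hw j t ht s hs
    rcases aux_vertex_dich hc0 hv0 j (N - w.length) t ht with ⟨t1, ht1, rfl⟩ | hd'
    · obtain ⟨s1, hs1, hs2⟩ := hstep (w ++ List.replicate (N - w.length) j)
        (by simp; omega) s hs
      have e1 := hs2 t1 ht1 (p j) (aux_vertex_mem h j)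
      have e2 := aux_Lw_dist p (List.replicate (N - w.length) j) t1 (p j)
      rw [aux_Lw_append, aux_Lw_append, aux_Lw_vertex] at e1
      rw [aux_Lw_vertex, List.length_replicate] at e2
      have e3 : dist t1 (p j) ≤
          2 ^ N * dist (aux_Lw p (List.replicate (N - w.length) j) t1) (p j) := by
        rw [e2]
        exact mul_le_mul_of_nonneg_right (pow_le_pow_right₀ (by norm_num) (Nat.sub_le _ _))
          dist_nonneg
      have e4 := mul_le_mul_of_nonneg_left (hP0 j t1 ht1 s1 hs1) ha
      have e5 := hscal C1 (le_max_left _ _) _ _ dist_nonneg dist_nonneg e3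
      linarith
    · refine (hosc _ (aux_Lw_mem h w ht) _ (aux_Lw_mem h w (aux_vertex_mem h j)) s hs).trans
        (hbig _ (le_trans ?_ hd'))
      exact div_le_div_of_nonneg_left hc0.le (by positivity)
        (pow_le_pow_right₀ (by norm_num) (Nat.sub_le _ _))
  set C3 := 2 * (C1 * (κ * 2 ^ N) ^ σ) with hC3
  set C2 := max C0 (max M' C3) with hC2
  have hC20 : 0 ≤ C2 := hC00.trans (le_max_left _ _)
  have hsplitcase : ∀ w : List (Fin 3), w.length < N → ∀ i j, i ≠ j → ∀ x ∈ S, ∀ x' ∈ S, ∀ s ∈ T,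
      |F (aux_Lw p w (Lmap p i x)) s - F (aux_Lw p w (Lmap p i (p j))) s| ≤
        C1 * (κ * 2 ^ N) ^ σ *
          dist (aux_Lw p w (Lmap p i x)) (aux_Lw p w (Lmap p j x')) ^ σ := by
    intro w hw i j hij x hx x' hx' s hs
    have e1 := hPm (w ++ [i]) (by simp; omega) j x hx s hs
    rw [aux_Lw_append, aux_Lw_append] at e1
    refine e1.trans ?_
    rw [mul_assoc, ← Real.mul_rpow (by positivity) dist_nonneg]
    refine mul_le_mul_of_nonneg_left (Real.rpow_le_rpow dist_nonneg ?_ hσ.le) hC10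
    refine (hg i j hij x hx x' hx').trans ?_
    rw [aux_Lw_dist p w, mul_assoc]
    refine mul_le_mul_of_nonneg_left ?_ hκ.le
    exact mul_le_mul_of_nonneg_right (pow_le_pow_right₀ (by norm_num) hw.le) dist_nonneg
  have hQn : ∀ n : ℕ, ∀ t ∈ S, ∀ t' ∈ S, ∀ s ∈ T, 1 ≤ 2 ^ n * dist t t' →
      |F t s - F t' s| ≤ C2 * dist t t' ^ σ := by
    intro n
    induction n with
    | zero =>
      intro t ht t' ht' s hs hd
      have hd1 : 1 ≤ dist t t' := by simpa using hd
      have e1 : 1 ≤ dist t t' ^ σ := Real.one_le_rpow hd1 hσ.le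
      calc _ ≤ M' := hosc t ht t' ht' s hs
        _ ≤ C2 := (le_max_left _ _).trans (le_max_right _ _)
        _ ≤ _ := le_mul_of_one_le_right hC20 e1
    | succ n ih =>
      intro t ht t' ht' s hs hd
      obtain ⟨w, t0, ht0, t0', ht0', rfl, rfl, hw⟩ := aux_split h N t ht t' ht'
      rcases hw with hw | ⟨hw, i, j, hij, x, hx, x', hx', rfl, rfl⟩
      · obtain ⟨s1, hs1, hs2⟩ := hstep w hw s hs
        have e1 := hs2 t0 ht0 t0' ht0'
        have e2 := aux_Lw_dist p w t0 t0'
        rw [hw] at e2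
        have e3 : 1 ≤ 2 ^ n * dist t0 t0' := by
          have : (2:ℝ) ^ 1 ≤ 2 ^ N := pow_le_pow_right₀ (by norm_num) hN
          calc 1 ≤ 2 ^ (n+1) * dist (aux_Lw p w t0) (aux_Lw p w t0') := hd
            _ = 2 ^ n * (2 ^ 1 * dist (aux_Lw p w t0) (aux_Lw p w t0')) := by ring
            _ ≤ 2 ^ n * (2 ^ N * dist (aux_Lw p w t0) (aux_Lw p w t0')) := by gcongr
            _ = _ := by rw [e2]
        have e4 := mul_le_mul_of_nonneg_left (ih t0 ht0 t0' ht0' s1 hs1 e3) ha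
        have e5 := hscal C2 (le_max_left _ _) _ _ dist_nonneg dist_nonneg e2.le
        linarith
      · have e1 := hsplitcase w hw i j hij x hx x' hx' s hs
        have e2 := hsplitcase w hw j i hij.symm x' hx' x hx s hs
        rw [aux_Lmap_swap p j i, dist_comm, abs_sub_comm] at e2
        have e3 := abs_sub_le (F (aux_Lw p w (Lmap p i x)) s)
          (F (aux_Lw p w (Lmap p i (p j))) s) (F (aux_Lw p w (Lmap p j x')) s)
        have e4 : C3 ≤ C2 := (le_max_right _ _).trans (le_max_right _ _)
        have e5 := mul_le_mul_of_nonneg_right e4 (Real.rpow_nonneg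
          (dist_nonneg (x := aux_Lw p w (Lmap p i x)) (y := aux_Lw p w (Lmap p j x'))) σ)
        rw [hC3] at e5
        linarith
  refine ⟨C2, fun t ht t' ht' s hs => ?_⟩
  rcases (dist_nonneg (x := t) (y := t')).eq_or_lt with hd | hd
  · rw [dist_eq_zero.1 hd.symm]
    simp [Real.zero_rpow hσ.ne']
  · obtain ⟨n, hn⟩ := hlarge 1 _ hd
    exact hQn n t ht t' ht' s hs hn

lemma aux_dist2_fst (t t' s : E2) : dist2 (t, s) (t', s) = dist t t' := by
  simp [dist2, Real.sqrt_sq dist_nonneg]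

lemma aux_dist2_snd (t s s' : E2) : dist2 (t, s) (t, s') = dist s s' := by
  simp [dist2, Real.sqrt_sq dist_nonneg]

lemma aux_dist2_nonneg (x y : E2 × E2) : 0 ≤ dist2 x y := Real.sqrt_nonneg _

lemma aux_le_dist2_fst (x y : E2 × E2) : dist x.1 y.1 ≤ dist2 x y :=
  Real.le_sqrt_of_sq_le (by nlinarith [sq_nonneg (dist x.2 y.2)])

lemma aux_le_dist2_snd (x y : E2 × E2) : dist x.2 y.2 ≤ dist2 x y :=
  Real.le_sqrt_of_sq_le (by nlinarith [sq_nonneg (dist x.1 y.1)])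

lemma aux_word_of_list {N : ℕ} (l : List (Fin 3)) (hl : l.length = N) :
    ∃ ω : Word N, List.ofFn ω = l := by
  subst hl
  exact ⟨l.get, List.ofFn_get l⟩

/-- If `‖α‖_∞ := max_{ω,η} ‖α_{ωη}‖_∞ < 1/2^N`, then the fractal interpolation
function `f` on `SG' × SG''` is Hölder continuous with exponent
`s = min{s_h, s_α}`, where `s_h` is the (common) Hölder exponent of the maps `h_{ωη}`
and `s_α = min_{ω,η} s_{α_{ωη}}`. -/
theorem stmt_10 (p q : Fin 3 → E2) (SG' SG'' : Set E2)
    (hSG' : IsSG p SG') (hSG'' : IsSG q SG'') (N : ℕ) (hN : 1 ≤ N)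
    (hdiam : ∀ x ∈ SG' ×ˢ SG'', ∀ y ∈ SG' ×ˢ SG'', dist2 x y ≤ 1)
    (α h : Word N → Word N → E2 × E2 → ℝ)
    (f : E2 × E2 → ℝ) (hfc : ContinuousOn f (SG' ×ˢ SG''))
    (hf : ∀ ω η : Word N, ∀ t ∈ SG', ∀ s ∈ SG'',
      f (wordMap p ω t, wordMap q η s) = α ω η (t, s) * f (t, s) + h ω η (t, s))
    (sh : ℝ) (hsh : 0 < sh ∧ sh ≤ 1) (Kh : ℝ)
    (hhHolder : ∀ ω η, HolderOn2 (SG' ×ˢ SG'') (h ω η) Kh sh)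
    (sα : Word N → Word N → ℝ) (hsα : ∀ ω η, 0 < sα ω η ∧ sα ω η ≤ 1)
    (Kα : Word N → Word N → ℝ)
    (hαHolder : ∀ ω η, HolderOn2 (SG' ×ˢ SG'') (α ω η) (Kα ω η) (sα ω η))
    (hαnorm : ∀ ω η, supAbs (SG' ×ˢ SG'') (α ω η) < 1)
    (hcase : (⨆ ωη : Word N × Word N, supAbs (SG' ×ˢ SG'') (α ωη.1 ωη.2)) < 1 / 2 ^ N) :
    ∃ C : ℝ, HolderOn2 (SG' ×ˢ SG'') f C (min sh (⨅ ωη : Word N × Word N, sα ωη.1 ωη.2)) := by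
  classical
  set σ := min sh (⨅ ωη : Word N × Word N, sα ωη.1 ωη.2) with hσdef
  obtain ⟨w0, hw0⟩ := exists_eq_ciInf_of_finite (f := fun ωη : Word N × Word N => sα ωη.1 ωη.2)
  have hσ : 0 < σ := lt_min hsh.1 (by rw [← hw0]; exact (hsα _ _).1)
  have hσ1 : σ ≤ 1 := (min_le_left _ _).trans hsh.2
  have hσα : ∀ ω η, σ ≤ sα ω η := fun ω η => (min_le_right _ _).trans
    (ciInf_le (Set.finite_range _).bddBelow ((ω, η) : Word N × Word N))
  set a := ⨆ ωη : Word N × Word N, supAbs (SG' ×ˢ SG'') (α ωη.1 ωη.2) with hadef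
  have hαa : ∀ ω η, ∀ x ∈ SG' ×ˢ SG'', |α ω η x| ≤ a := by
    intro ω η x hx
    have hb : BddAbove ((fun x => |α ω η x|) '' (SG' ×ˢ SG'')) := by
      refine ⟨|α ω η x| + |Kα ω η|, ?_⟩
      rintro _ ⟨y, hy, rfl⟩
      have e1 := hαHolder ω η y hy x hx
      have e2 : dist2 y x ^ sα ω η ≤ 1 :=
        Real.rpow_le_one (aux_dist2_nonneg _ _) (hdiam y hy x hx) (hsα ω η).1.le
      have e3 : 0 ≤ dist2 y x ^ sα ω η := Real.rpow_nonneg (aux_dist2_nonneg _ _) _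
      have e4 : Kα ω η * dist2 y x ^ sα ω η ≤ |Kα ω η| :=
        (mul_le_mul_of_nonneg_right (le_abs_self _) e3).trans
          (mul_le_of_le_one_right (abs_nonneg _) e2)
      have e5 := abs_sub_abs_le_abs_sub (α ω η y) (α ω η x)
      simp only
      linarith
    refine (le_csSup hb ⟨x, hx, rfl⟩).trans ?_
    exact le_ciSup (f := fun ωη : Word N × Word N => supAbs (SG' ×ˢ SG'') (α ωη.1 ωη.2))
      (Set.finite_range _).bddAbove (ω, η)
  obtain ⟨t₀, ht₀⟩ := hSG'.2.1
  obtain ⟨s₀, hs₀⟩ := hSG''.2.1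
  have ha : 0 ≤ a := (abs_nonneg _).trans
    (hαa (fun _ => 0) (fun _ => 0) (t₀, s₀) ⟨ht₀, hs₀⟩)
  have haN : a * 2 ^ N < 1 := by
    rwa [lt_div_iff₀ (by positivity)] at hcase
  obtain ⟨M, hM⟩ := (hSG'.2.2.1.prod hSG''.2.2.1).exists_bound_of_continuousOn hfc
  simp only [Real.norm_eq_abs] at hM
  have hM0 : 0 ≤ M := (abs_nonneg _).trans (hM (t₀, s₀) ⟨ht₀, hs₀⟩)
  set A := ∑ ωη : Word N × Word N, |Kα ωη.1 ωη.2| with hA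
  have hKA : ∀ ω η, |Kα ω η| ≤ A := fun ω η =>
    Finset.single_le_sum (f := fun ωη : Word N × Word N => |Kα ωη.1 ωη.2|)
      (fun _ _ => abs_nonneg _) (Finset.mem_univ ((ω, η) : Word N × Word N))
  have hA0 : 0 ≤ A := Finset.sum_nonneg fun _ _ => abs_nonneg _
  set B := M * A + |Kh| with hB
  have hB0 : 0 ≤ B := by positivity
  have key : ∀ ω η : Word N, ∀ x ∈ SG' ×ˢ SG'', ∀ y ∈ SG' ×ˢ SG'',
      |f (wordMap p ω x.1, wordMap q η x.2) - f (wordMap p ω y.1, wordMap q η y.2)| ≤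
        a * |f x - f y| + B * dist2 x y ^ σ := by
    intro ω η x hx y hy
    rw [hf ω η x.1 hx.1 x.2 hx.2, hf ω η y.1 hy.1 y.2 hy.2]
    have d0 := aux_dist2_nonneg x y
    have d1 := hdiam x hx y hy
    have r0 : 0 ≤ dist2 x y ^ σ := Real.rpow_nonneg d0 _
    have r1 : dist2 x y ^ sh ≤ dist2 x y ^ σ :=
      Real.rpow_le_rpow_of_exponent_ge' d0 d1 hσ.le (min_le_left _ _)
    have r2 : dist2 x y ^ sα ω η ≤ dist2 x y ^ σ :=
      Real.rpow_le_rpow_of_exponent_ge' d0 d1 hσ.le (hσα ω η)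
    have k1 : |h ω η x - h ω η y| ≤ |Kh| * dist2 x y ^ σ :=
      (hhHolder ω η x hx y hy).trans (mul_le_mul (le_abs_self _) r1
        (Real.rpow_nonneg d0 _) (abs_nonneg _))
    have k2 : |α ω η x - α ω η y| ≤ A * dist2 x y ^ σ :=
      (hαHolder ω η x hx y hy).trans (mul_le_mul ((le_abs_self _).trans (hKA ω η)) r2
        (Real.rpow_nonneg d0 _) hA0)
    have e : α ω η (x.1, x.2) * f (x.1, x.2) + h ω η (x.1, x.2) -
        (α ω η (y.1, y.2) * f (y.1, y.2) + h ω η (y.1, y.2)) =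
        α ω η x * (f x - f y) + f y * (α ω η x - α ω η y) + (h ω η x - h ω η y) := by
      simp only [Prod.mk.eta]
      ring
    rw [e]
    have m1 : |α ω η x * (f x - f y)| ≤ a * |f x - f y| := by
      rw [abs_mul]
      exact mul_le_mul_of_nonneg_right (hαa ω η x hx) (abs_nonneg _)
    have m2 : |f y * (α ω η x - α ω η y)| ≤ M * (A * dist2 x y ^ σ) := by
      rw [abs_mul]
      exact mul_le_mul (hM y hy) k2 (abs_nonneg _) hM0
    have m3 := abs_add_three (α ω η x * (f x - f y)) (f y * (α ω η x - α ω η y))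
      (h ω η x - h ω η y)
    have m4 : B * dist2 x y ^ σ = M * (A * dist2 x y ^ σ) + |Kh| * dist2 x y ^ σ := by
      rw [hB]; ring
    linarith
  obtain ⟨C₁, hC₁⟩ := aux_onevar hSG' (T := SG'') (fun t s => f (t, s)) N hN a B M σ ha haN hB0
    hσ hσ1 (fun t ht s hs => hM (t, s) ⟨ht, hs⟩) (by
      intro l hl s hs
      obtain ⟨ω, rfl⟩ := aux_word_of_list l hl
      obtain ⟨l', hl', s1, hs1, rfl⟩ := aux_Lw_ex hSG'' N s hs
      obtain ⟨η, rfl⟩ := aux_word_of_list l' hl'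
      refine ⟨s1, hs1, fun t ht t' ht' => ?_⟩
      have := key ω η (t, s1) ⟨ht, hs1⟩ (t', s1) ⟨ht', hs1⟩
      simpa only [aux_wordMap, aux_dist2_fst] using this)
  obtain ⟨C₂, hC₂⟩ := aux_onevar hSG'' (T := SG') (fun s t => f (t, s)) N hN a B M σ ha haN hB0
    hσ hσ1 (fun s hs t ht => hM (t, s) ⟨ht, hs⟩) (by
      intro l hl t ht
      obtain ⟨η, rfl⟩ := aux_word_of_list l hl
      obtain ⟨l', hl', t1, ht1, rfl⟩ := aux_Lw_ex hSG' N t ht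
      obtain ⟨ω, rfl⟩ := aux_word_of_list l' hl'
      refine ⟨t1, ht1, fun s hs s' hs' => ?_⟩
      have := key ω η (t1, s) ⟨ht1, hs⟩ (t1, s') ⟨ht1, hs'⟩
      simpa only [aux_wordMap, aux_dist2_snd] using this)
  refine ⟨|C₁| + |C₂|, ?_⟩
  rintro ⟨t, s⟩ ⟨ht, hs⟩ ⟨t', s'⟩ ⟨ht', hs'⟩
  have e1 := hC₁ t ht t' ht' s hs
  have e2 := hC₂ s hs s' hs' t' ht'
  have e3 := abs_sub_le (f (t, s)) (f (t', s)) (f (t', s'))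
  have g1 : C₁ * dist t t' ^ σ ≤ |C₁| * dist2 (t, s) (t', s') ^ σ :=
    mul_le_mul (le_abs_self _) (Real.rpow_le_rpow dist_nonneg
      (aux_le_dist2_fst (t, s) (t', s')) hσ.le) (Real.rpow_nonneg dist_nonneg _) (abs_nonneg _)
  have g2 : C₂ * dist s s' ^ σ ≤ |C₂| * dist2 (t, s) (t', s') ^ σ :=
    mul_le_mul (le_abs_self _) (Real.rpow_le_rpow dist_nonneg
      (aux_le_dist2_snd (t, s) (t', s')) hσ.le) (Real.rpow_nonneg dist_nonneg _) (abs_nonneg _)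
  rw [add_mul]
  linarith
end
end

section
/- Let p_1, p_2, p_3 ∈ ℝ² be the vertices of an equilateral triangle, L_i(t) = (t+p_i)/2, and let SG be the unique nonempty compact set with SG = L_1(SG) ∪ L_2(SG) ∪ L_3(SG). Then the Hausdorff dimension of SG equals log 3 / log 2. -/
noncomputable section

open MeasureTheory Set Filter Topology
open scoped ENNReal NNReal

/-! ### Finite expansions -/

/-- partial sums of the coding map -/
def psum (p : Fin 3 → E2) (ω : ℕ → Fin 3) (n : ℕ) : E2 :=
  ∑ k ∈ Finset.range n, ((2 : ℝ)⁻¹ ^ (k + 1)) • p (ω k)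

lemma psum_mem {p : Fin 3 → E2} {S : Set E2} (h : S = ⋃ i : Fin 3, Lmap p i '' S)
    (ω : ℕ → Fin 3) (n : ℕ) : ∀ x ∈ S, psum p ω n + ((2 : ℝ)⁻¹ ^ n) • x ∈ S := by
  induction n with
  | zero => intro x hx; simpa [psum] using hx
  | succ n ih =>
    intro x hx
    have h1 : Lmap p (ω n) x ∈ S := by
      rw [h]; exact mem_iUnion.2 ⟨ω n, x, hx, rfl⟩
    have h2 := ih _ h1
    convert h2 using 1
    simp only [psum, Finset.sum_range_succ, Lmap, smul_add, smul_smul, pow_succ]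
    abel

lemma exists_psum {p : Fin 3 → E2} {S : Set E2} (h : S = ⋃ i : Fin 3, Lmap p i '' S)
    (n : ℕ) : ∀ x ∈ S, ∃ w : Fin n → Fin 3, ∃ y ∈ S,
      (∑ k : Fin n, ((2 : ℝ)⁻¹ ^ (k.val + 1)) • p (w k)) + ((2 : ℝ)⁻¹ ^ n) • y = x := by
  induction n with
  | zero => intro x hx; exact ⟨Fin.elim0, x, hx, by simp⟩
  | succ n ih =>
    intro x hx
    obtain ⟨w, y, hy, rfl⟩ := ih x hx
    rw [h] at hy
    obtain ⟨i, z, hz, rfl⟩ := mem_iUnion.1 hy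
    refine ⟨Fin.snoc w i, z, hz, ?_⟩
    rw [Fin.sum_univ_castSucc]
    simp only [Fin.snoc_castSucc, Fin.snoc_last, Fin.val_castSucc, Fin.val_last, Lmap, smul_add,
      smul_smul, pow_succ]
    abel

/-- the dimension -/
abbrev sdim : ℝ := Real.log 3 / Real.log 2

lemma sdim_pos : 0 < sdim := div_pos (Real.log_pos (by norm_num)) (Real.log_pos (by norm_num))

lemma two_rpow_sdim : (2 : ℝ) ^ sdim = 3 := by
  have := Real.log_pos (show (1 : ℝ) < 2 by norm_num)
  rw [Real.rpow_def_of_pos (by norm_num), sdim, mul_div_cancel₀ _ this.ne',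
    Real.exp_log (by norm_num)]

lemma half_pow_rpow (n : ℕ) : (((2 : ℝ)⁻¹ ^ n) ^ sdim) = (3 : ℝ)⁻¹ ^ n := by
  rw [← Real.rpow_natCast, ← Real.rpow_mul (by norm_num), mul_comm, Real.rpow_mul (by norm_num),
    Real.inv_rpow (by norm_num), two_rpow_sdim, Real.rpow_natCast]

lemma ehalf_pow_rpow (n : ℕ) :
    (ENNReal.ofReal ((2 : ℝ)⁻¹ ^ n)) ^ sdim = ENNReal.ofReal ((3 : ℝ)⁻¹ ^ n) := by
  rw [ENNReal.ofReal_rpow_of_nonneg (by positivity) sdim_pos.le, half_pow_rpow]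

lemma upper_bound {p : Fin 3 → E2} {S : Set E2} (hc : IsCompact S)
    (h : S = ⋃ i : Fin 3, Lmap p i '' S) : μH[sdim] S ≠ ∞ := by
  set D := Metric.ediam S with hD
  have hDt : D ≠ ∞ := hc.isBounded.ediam_ne_top
  let t : (n : ℕ) → (Fin n → Fin 3) → Set E2 := fun n w =>
    (fun y => (∑ k : Fin n, ((2 : ℝ)⁻¹ ^ (k.val + 1)) • p (w k)) + ((2 : ℝ)⁻¹ ^ n) • y) '' S
  have hdiam : ∀ n w, Metric.ediam (t n w) ≤ ENNReal.ofReal ((2 : ℝ)⁻¹ ^ n) * D := by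
    intro n w
    refine Metric.ediam_le ?_
    rintro _ ⟨x, hx, rfl⟩ _ ⟨y, hy, rfl⟩
    simp only [edist_add_left, edist_smul₀]
    have e : ‖(2 : ℝ)⁻¹ ^ n‖ₑ = ENNReal.ofReal ((2 : ℝ)⁻¹ ^ n) :=
      Real.enorm_of_nonneg (by positivity)
    change ‖(2 : ℝ)⁻¹ ^ n‖ₑ * edist x y ≤ _
    rw [e]
    gcongr
    exact Metric.edist_le_ediam_of_mem hx hy
  have key := Measure.hausdorffMeasure_le_liminf_sum (β := ℕ) (ι := fun n => (Fin n → Fin 3))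
    sdim S (l := atTop) (fun n => ENNReal.ofReal ((2 : ℝ)⁻¹ ^ n) * D) ?_ t ?_ ?_
  · refine ne_top_of_le_ne_top (b := D ^ sdim) (ENNReal.rpow_ne_top_of_nonneg sdim_pos.le hDt) ?_
    refine key.trans ?_
    refine liminf_le_of_frequently_le' (Eventually.frequently (Eventually.of_forall fun n => ?_))
    calc ∑ w, Metric.ediam (t n w) ^ sdim
        ≤ ∑ w : Fin n → Fin 3, (ENNReal.ofReal ((2 : ℝ)⁻¹ ^ n) * D) ^ sdim := by
          refine Finset.sum_le_sum fun w _ => ?_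
          exact ENNReal.rpow_le_rpow (hdiam n w) sdim_pos.le
      _ = D ^ sdim := by
          rw [ENNReal.mul_rpow_of_nonneg _ _ sdim_pos.le, ehalf_pow_rpow]
          simp only [Finset.sum_const, Finset.card_univ, Fintype.card_pi, Fintype.card_fin,
            Finset.prod_const, nsmul_eq_mul]
          rw [← mul_assoc]
          have : ((3 ^ n : ℕ) : ℝ≥0∞) * ENNReal.ofReal ((3 : ℝ)⁻¹ ^ n) = 1 := by
            rw [← ENNReal.ofReal_natCast, ← ENNReal.ofReal_mul (by positivity)]
            push_cast
            rw [← mul_pow]; norm_num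
          rw [this, one_mul]
  · have h1 : Tendsto (fun n : ℕ => ENNReal.ofReal ((2 : ℝ)⁻¹ ^ n)) atTop (𝓝 0) := by
      have := ENNReal.tendsto_ofReal
        (tendsto_pow_atTop_nhds_zero_of_lt_one (r := (2 : ℝ)⁻¹) (by norm_num) (by norm_num))
      simpa using this
    simpa using ENNReal.Tendsto.mul_const h1 (Or.inr hDt)
  · exact Eventually.of_forall fun n w => hdiam n w
  · refine Eventually.of_forall fun n x hx => ?_
    obtain ⟨w, y, hy, e⟩ := exists_psum h n x hx
    exact mem_iUnion.2 ⟨w, y, hy, e⟩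

/-! ### Coding map -/

lemma hasSum_half : HasSum (fun k : ℕ => (2 : ℝ)⁻¹ ^ (k + 1)) 1 := by
  have := (hasSum_geometric_of_lt_one (r := (2 : ℝ)⁻¹) (by norm_num) (by norm_num)).mul_right 2⁻¹
  norm_num at this
  simpa [pow_succ] using this

lemma summable_bound (p : Fin 3 → E2) :
    Summable fun k : ℕ => (2 : ℝ)⁻¹ ^ (k + 1) * ∑ i, ‖p i‖ :=
  hasSum_half.summable.mul_right _

lemma norm_term_le (p : Fin 3 → E2) (k : ℕ) (ω : ℕ → Fin 3) :
    ‖((2 : ℝ)⁻¹ ^ (k + 1)) • p (ω k)‖ ≤ (2 : ℝ)⁻¹ ^ (k + 1) * ∑ i, ‖p i‖ := by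
  rw [norm_smul, Real.norm_of_nonneg (by positivity)]
  gcongr
  exact Finset.single_le_sum (f := fun i => ‖p i‖) (fun i _ => norm_nonneg _) (Finset.mem_univ _)

lemma summable_code (p : Fin 3 → E2) (ω : ℕ → Fin 3) :
    Summable fun k : ℕ => ((2 : ℝ)⁻¹ ^ (k + 1)) • p (ω k) :=
  Summable.of_norm_bounded (summable_bound p) fun k => norm_term_le p k ω

/-- coding map -/
def pcode (p : Fin 3 → E2) (ω : ℕ → Fin 3) : E2 := ∑' k : ℕ, ((2 : ℝ)⁻¹ ^ (k + 1)) • p (ω k)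

lemma continuous_pcode (p : Fin 3 → E2) : Continuous (pcode p) := by
  refine continuous_tsum (fun k => ?_) (summable_bound p) (norm_term_le p)
  have : Continuous p := continuous_of_discreteTopology
  fun_prop

lemma pcode_split (p : Fin 3 → E2) (ω : ℕ → Fin 3) (n : ℕ) :
    pcode p ω = psum p ω n + ((2 : ℝ)⁻¹ ^ n) • pcode p (fun k => ω (k + n)) := by
  rw [pcode, ← (summable_code p ω).sum_add_tsum_nat_add n, psum, pcode, ← tsum_const_smul'' ]
  congr 2
  ext1 k
  rw [smul_smul, ← pow_add]; congr 2; ring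

lemma pcode_mem {p : Fin 3 → E2} {S : Set E2} (hne : S.Nonempty) (hc : IsCompact S)
    (h : S = ⋃ i : Fin 3, Lmap p i '' S) (ω : ℕ → Fin 3) : pcode p ω ∈ S := by
  obtain ⟨x, hx⟩ := hne
  have h1 : Tendsto (fun n => psum p ω n + ((2 : ℝ)⁻¹ ^ n) • x) atTop
      (𝓝 (pcode p ω + (0 : ℝ) • x)) := by
    refine Tendsto.add (summable_code p ω).hasSum.tendsto_sum_nat ?_
    exact (tendsto_pow_atTop_nhds_zero_of_lt_one (by norm_num) (by norm_num)).smul_const x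
  rw [zero_smul, add_zero] at h1
  exact hc.isClosed.mem_of_tendsto h1 (Eventually.of_forall fun n => psum_mem h ω n x hx)

/-- digit -/
def dig (j i : Fin 3) : ℕ := if i = j then 1 else 0

/-- integer code of a word w.r.t. coordinate `j` -/
def icode (j : Fin 3) (ω : ℕ → Fin 3) : ℕ → ℕ
  | 0 => 0
  | n + 1 => 2 * icode j ω n + dig j (ω n)

lemma icode_inj (ω ω' : ℕ → Fin 3) (n : ℕ) (h1 : icode 1 ω n = icode 1 ω' n)
    (h2 : icode 2 ω n = icode 2 ω' n) : ∀ k < n, ω k = ω' k := by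
  induction n with
  | zero => intro k hk; omega
  | succ n ih =>
    have hd : ∀ j i, dig j i ≤ 1 := by intro j i; unfold dig; split <;> omega
    simp only [icode] at h1 h2
    have a1 := hd 1 (ω n)
    have a2 := hd 1 (ω' n)
    have a3 := hd 2 (ω n)
    have a4 := hd 2 (ω' n)
    have e1 : dig 1 (ω n) = dig 1 (ω' n) := by omega
    have e2 : dig 2 (ω n) = dig 2 (ω' n) := by omega
    have e : ∀ i i' : Fin 3, dig 1 i = dig 1 i' → dig 2 i = dig 2 i' → i = i' := by decide
    intro k hk
    rcases Nat.lt_succ_iff_lt_or_eq.1 hk with hk | rfl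
    · exact ih (by omega) (by omega) k hk
    · exact e _ _ e1 e2

/-- a linear coordinate functional -/
def IsCoord (p : Fin 3 → E2) (j : Fin 3) (φ : E2 →L[ℝ] ℝ) : Prop :=
  ∀ i, φ (p i) = φ (p 0) + dig j i

lemma exists_coord {p : Fin 3 → E2} (h : IsEquilateral p) :
    (∃ φ, IsCoord p 1 φ) ∧ ∃ φ, IsCoord p 2 φ := by
  set u := p 1 - p 0 with hu
  set v := p 2 - p 0 with hv
  have e1 : ‖v‖ = ‖u‖ := by
    have := h.2 2 0 1 0 (by decide) (by decide)
    rwa [dist_eq_norm, dist_eq_norm] at this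
  have e2 : ‖u - v‖ = ‖u‖ := by
    have := h.2 1 2 1 0 (by decide) (by decide)
    rw [dist_eq_norm, dist_eq_norm] at this
    simpa [hu, hv] using this
  have hpos : 0 < ‖u‖ := norm_pos_iff.2 (sub_ne_zero.2 (h.1.ne (by decide)))
  have huv : inner ℝ u v = ‖u‖ ^ 2 / 2 := by
    have := norm_sub_sq_real u v
    rw [e2, e1] at this
    linarith
  have hvu : inner ℝ v u = ‖u‖ ^ 2 / 2 := by rw [real_inner_comm, huv]
  have huu : inner ℝ u u = ‖u‖ ^ 2 := real_inner_self_eq_norm_sq u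
  have hvv : inner ℝ v v = ‖u‖ ^ 2 := by rw [real_inner_self_eq_norm_sq, e1]
  have p1 : p 1 = p 0 + u := by simp [hu]
  have p2 : p 2 = p 0 + v := by simp [hv]
  constructor
  · refine ⟨(2 / (3 * ‖u‖ ^ 2)) • innerSL ℝ ((2 : ℝ) • u - v), fun i => ?_⟩
    fin_cases i
    · simp [dig]
    · simp only [Fin.mk_one, Fin.isValue, p1, map_add, dig, _root_.smul_apply,
        innerSL_apply_apply, inner_sub_left, inner_smul_left, huu, huv, hvu, hvv, smul_eq_mul]
      simp
      field_simp
      norm_num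
    · simp only [Fin.reduceFinMk, Fin.isValue, p2, map_add, dig, _root_.smul_apply,
        innerSL_apply_apply, inner_sub_left, inner_smul_left, huu, huv, hvu, hvv, smul_eq_mul]
      simp
      right; ring
  · refine ⟨(2 / (3 * ‖u‖ ^ 2)) • innerSL ℝ ((2 : ℝ) • v - u), fun i => ?_⟩
    fin_cases i
    · simp [dig]
    · simp only [Fin.mk_one, Fin.isValue, p1, map_add, dig, _root_.smul_apply,
        innerSL_apply_apply, inner_sub_left, inner_smul_left, huu, huv, hvu, hvv, smul_eq_mul]
      simp
      right; ring
    · simp only [Fin.reduceFinMk, Fin.isValue, p2, map_add, dig, _root_.smul_apply,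
        innerSL_apply_apply, inner_sub_left, inner_smul_left, huu, huv, hvu, hvv, smul_eq_mul]
      simp
      field_simp
      norm_num

lemma coord_psum {p : Fin 3 → E2} {j : Fin 3} {φ : E2 →L[ℝ] ℝ} (h : IsCoord p j φ)
    (ω : ℕ → Fin 3) (n : ℕ) :
    (2 : ℝ) ^ n * φ (psum p ω n) = icode j ω n + (2 ^ n - 1) * φ (p 0) := by
  induction n with
  | zero => simp [psum, icode]
  | succ n ih =>
    have : psum p ω (n + 1) = psum p ω n + ((2 : ℝ)⁻¹ ^ (n + 1)) • p (ω n) := by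
      simp [psum, Finset.sum_range_succ]
    rw [this, map_add, map_smul, h (ω n), mul_add, smul_eq_mul, ← mul_assoc (2 ^ (n + 1)), ← mul_pow,
      pow_succ, mul_right_comm, ih, icode]
    push_cast
    norm_num
    ring

lemma coord_range {p : Fin 3 → E2} {j : Fin 3} {φ : E2 →L[ℝ] ℝ} (h : IsCoord p j φ)
    (ω : ℕ → Fin 3) : φ (p 0) ≤ φ (pcode p ω) ∧ φ (pcode p ω) ≤ φ (p 0) + 1 := by
  have hs : HasSum (fun k : ℕ => (2 : ℝ)⁻¹ ^ (k + 1)) 1 := hasSum_half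
  have hm : HasSum (fun k : ℕ => (2 : ℝ)⁻¹ ^ (k + 1) * φ (p (ω k))) (φ (pcode p ω)) := by
    have := (summable_code p ω).hasSum.mapL φ
    simpa [pcode] using this
  have hd : ∀ i, (0 : ℝ) ≤ dig j i ∧ (dig j i : ℝ) ≤ 1 := by
    intro i; unfold dig; split <;> simp
  constructor
  · have := hasSum_le (fun k => ?_) (hs.mul_right (φ (p 0))) hm
    · simpa using this
    · rw [h (ω k)]
      exact mul_le_mul_of_nonneg_left (by linarith [(hd (ω k)).1]) (by positivity)
  · have := hasSum_le (fun k => ?_) hm (hs.mul_right (φ (p 0) + 1))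
    · simpa using this
    · rw [h (ω k)]
      exact mul_le_mul_of_nonneg_left (by linarith [(hd (ω k)).2]) (by positivity)

lemma coord_icode {p : Fin 3 → E2} {j : Fin 3} {φ : E2 →L[ℝ] ℝ} (h : IsCoord p j φ)
    (ω : ℕ → Fin 3) (n : ℕ) :
    (icode j ω n : ℝ) ≤ 2 ^ n * (φ (pcode p ω) - φ (p 0)) ∧
      2 ^ n * (φ (pcode p ω) - φ (p 0)) ≤ icode j ω n + 1 := by
  have h1 := coord_psum h ω n
  have h2 := coord_range h (fun k => ω (k + n))
  have h3 : (2 : ℝ) ^ n * φ (pcode p ω) =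
      2 ^ n * φ (psum p ω n) + φ (pcode p (fun k => ω (k + n))) := by
    rw [pcode_split p ω n, map_add, map_smul, smul_eq_mul, mul_add, ← mul_assoc, ← mul_pow]
    norm_num
  constructor <;> linarith [h2.1, h2.2]

lemma icode_close {p : Fin 3 → E2} {j : Fin 3} {φ : E2 →L[ℝ] ℝ} (h : IsCoord p j φ)
    {K : ℕ} (hK : ‖φ‖ ≤ K) (ω ω' : ℕ → Fin 3) (n : ℕ)
    (hd : dist (pcode p ω) (pcode p ω') ≤ (2 : ℝ)⁻¹ ^ n) :
    icode j ω n ≤ icode j ω' n + (K + 1) := by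
  have h1 := (coord_icode h ω n).1
  have h2 := (coord_icode h ω' n).2
  have h3 : φ (pcode p ω) - φ (pcode p ω') ≤ K * (2 : ℝ)⁻¹ ^ n := by
    rw [← map_sub]
    refine (le_abs_self _).trans ((φ.le_opNorm _).trans ?_)
    rw [← dist_eq_norm]
    gcongr
  have h4 : (2 : ℝ) ^ n * (φ (pcode p ω) - φ (pcode p ω')) ≤ K := by
    calc _ ≤ (2 : ℝ) ^ n * (K * (2 : ℝ)⁻¹ ^ n) := by gcongr
      _ = K := by rw [mul_left_comm, ← mul_pow]; norm_num
  have : (icode j ω n : ℝ) ≤ icode j ω' n + (K + 1) := by linarith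
  exact_mod_cast this

/-! ### The measure -/

/-- uniform Bernoulli measure on words -/
def bern : Measure (ℕ → Fin 3) :=
  Measure.infinitePi fun _ : ℕ => (PMF.uniformOfFintype (Fin 3)).toMeasure

instance : IsProbabilityMeasure bern := by unfold bern; infer_instance

lemma bern_cyl (ω : ℕ → Fin 3) (n : ℕ) :
    bern {ω' | ∀ k < n, ω' k = ω k} = ENNReal.ofReal ((3 : ℝ)⁻¹ ^ n) := by
  have : {ω' : ℕ → Fin 3 | ∀ k < n, ω' k = ω k} =
      Set.pi (Finset.range n : Set ℕ) (fun k => {ω k}) := by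
    ext; simp [Set.mem_pi]
  rw [this, bern, Measure.infinitePi_pi _ (fun _ _ => measurableSet_singleton _)]
  have h1 : ∀ i : Fin 3, (PMF.uniformOfFintype (Fin 3)).toMeasure {i} = ENNReal.ofReal (3 : ℝ)⁻¹ := by
    intro i
    rw [PMF.toMeasure_apply_singleton _ _ (measurableSet_singleton i), PMF.uniformOfFintype_apply,
      ENNReal.ofReal_inv_of_pos (by norm_num)]
    simp
  simp only [h1, Finset.prod_const, Finset.card_range]
  rw [ENNReal.ofReal_pow (by norm_num)]

lemma bern_code (a b n : ℕ) :
    bern {ω | icode 1 ω n = a ∧ icode 2 ω n = b} ≤ ENNReal.ofReal ((3 : ℝ)⁻¹ ^ n) := by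
  rcases eq_empty_or_nonempty {ω | icode 1 ω n = a ∧ icode 2 ω n = b} with h | ⟨ω, h1, h2⟩
  · rw [h]; simp
  · rw [← bern_cyl ω n]
    refine measure_mono ?_
    rintro ω' ⟨h1', h2'⟩
    exact icode_inj ω' ω n (h1'.trans h1.symm) (h2'.trans h2.symm)

lemma bern_small {p : Fin 3 → E2} {φ ψ : E2 →L[ℝ] ℝ} (h1 : IsCoord p 1 φ) (h2 : IsCoord p 2 ψ)
    {K : ℕ} (hK : ‖φ‖ ≤ K) (hK' : ‖ψ‖ ≤ K) (A : Set E2) (n : ℕ)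
    (hA : Metric.ediam A ≤ ENNReal.ofReal ((2 : ℝ)⁻¹ ^ n)) :
    bern (pcode p ⁻¹' A) ≤ ((2 * K + 3) ^ 2 : ℕ) * ENNReal.ofReal ((3 : ℝ)⁻¹ ^ n) := by
  rcases eq_empty_or_nonempty (pcode p ⁻¹' A) with h | ⟨ω, hω⟩
  · rw [h]; simp
  set a := icode 1 ω n
  set b := icode 2 ω n
  let T : Finset (ℕ × ℕ) := Finset.Icc (a - (K + 1)) (a + (K + 1)) ×ˢ
    Finset.Icc (b - (K + 1)) (b + (K + 1))
  have hT : T.card ≤ (2 * K + 3) ^ 2 := by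
    rw [Finset.card_product, Nat.card_Icc, Nat.card_Icc, sq]
    exact Nat.mul_le_mul (by omega) (by omega)
  have hsub : pcode p ⁻¹' A ⊆ ⋃ c ∈ T, {ω | icode 1 ω n = c.1 ∧ icode 2 ω n = c.2} := by
    intro ω' hω'
    have hd : dist (pcode p ω) (pcode p ω') ≤ (2 : ℝ)⁻¹ ^ n := by
      have := (Metric.edist_le_ediam_of_mem (s := A) hω hω').trans hA
      rwa [edist_dist, ENNReal.ofReal_le_ofReal_iff (by positivity)] at this
    have hd' := hd
    rw [dist_comm] at hd'
    have c1 := icode_close h1 hK _ _ n hd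
    have c2 := icode_close h1 hK _ _ n hd'
    have c3 := icode_close h2 hK' _ _ n hd
    have c4 := icode_close h2 hK' _ _ n hd'
    refine mem_iUnion₂.2 ⟨(icode 1 ω' n, icode 2 ω' n), ?_, rfl, rfl⟩
    simp only [T, Finset.mem_product, Finset.mem_Icc]
    refine ⟨⟨?_, ?_⟩, ?_, ?_⟩ <;> omega
  calc bern (pcode p ⁻¹' A) ≤ _ := measure_mono hsub
    _ ≤ ∑ c ∈ T, bern {ω | icode 1 ω n = c.1 ∧ icode 2 ω n = c.2} := measure_biUnion_finset_le _ _
    _ ≤ ∑ c ∈ T, ENNReal.ofReal ((3 : ℝ)⁻¹ ^ n) := Finset.sum_le_sum fun c _ => bern_code _ _ _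
    _ = T.card * ENNReal.ofReal ((3 : ℝ)⁻¹ ^ n) := by simp
    _ ≤ _ := by gcongr

lemma bern_le {p : Fin 3 → E2} {M : ℕ}
    (H : ∀ (A : Set E2) (n : ℕ), Metric.ediam A ≤ ENNReal.ofReal ((2 : ℝ)⁻¹ ^ n) →
      bern (pcode p ⁻¹' A) ≤ M * ENNReal.ofReal ((3 : ℝ)⁻¹ ^ n))
    (A : Set E2) (hA : Metric.ediam A ≤ 1) :
    bern (pcode p ⁻¹' A) ≤ (M * 3 : ℕ) * Metric.ediam A ^ sdim := by
  have hfin : Metric.ediam A ≠ ∞ := ne_top_of_le_ne_top ENNReal.one_ne_top hA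
  set r := (Metric.ediam A).toReal with hr
  have hrA : Metric.ediam A = ENNReal.ofReal r := (ENNReal.ofReal_toReal hfin).symm
  have hr0 : 0 ≤ r := ENNReal.toReal_nonneg
  have hr1 : r ≤ 1 := by
    rw [hrA] at hA; simpa using hA
  rcases hr0.eq_or_lt with h0 | hpos
  · have : bern (pcode p ⁻¹' A) ≤ 0 := by
      have ht : Tendsto (fun n : ℕ => (M : ℝ≥0∞) * ENNReal.ofReal ((3 : ℝ)⁻¹ ^ n)) atTop
          (𝓝 (M * ENNReal.ofReal 0)) := by
        refine ENNReal.Tendsto.const_mul (ENNReal.tendsto_ofReal ?_) (Or.inr (by simp))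
        exact tendsto_pow_atTop_nhds_zero_of_lt_one (by norm_num) (by norm_num)
      simp only [ENNReal.ofReal_zero, mul_zero] at ht
      refine ge_of_tendsto' ht fun n => H A n ?_
      rw [hrA, ← h0]; simp
    exact this.trans zero_le
  · obtain ⟨n, hn1, hn2⟩ := exists_nat_pow_near_of_lt_one hpos hr1
      (show (0 : ℝ) < 2⁻¹ by norm_num) (by norm_num)
    have h1 := H A n (by rw [hrA]; exact ENNReal.ofReal_le_ofReal hn2)
    refine h1.trans ?_
    push_cast
    rw [mul_assoc]
    gcongr
    rw [hrA, ENNReal.ofReal_rpow_of_nonneg hr0 sdim_pos.le]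
    calc ENNReal.ofReal ((3 : ℝ)⁻¹ ^ n) = 3 * ENNReal.ofReal ((3 : ℝ)⁻¹ ^ (n + 1)) := by
          rw [← ENNReal.ofReal_ofNat 3, ← ENNReal.ofReal_mul (by norm_num)]
          congr 1; rw [pow_succ]; ring
      _ ≤ _ := by
          gcongr
          rw [← half_pow_rpow]
          exact Real.rpow_le_rpow (by positivity) hn1.le sdim_pos.le

lemma lower_bound {p : Fin 3 → E2} {S : Set E2} (he : IsEquilateral p) (hne : S.Nonempty)
    (hc : IsCompact S) (h : S = ⋃ i : Fin 3, Lmap p i '' S) : μH[sdim] S ≠ 0 := by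
  obtain ⟨⟨φ, h1⟩, ⟨ψ, h2⟩⟩ := exists_coord he
  obtain ⟨K, hK⟩ := exists_nat_ge (max ‖φ‖ ‖ψ‖)
  have hb := bern_le (p := p) (bern_small h1 h2 (le_of_max_le_left hK) (le_of_max_le_right hK))
  set M : ℕ := (2 * K + 3) ^ 2 * 3 with hM
  have hM0 : (M : ℝ≥0∞) ≠ 0 := by simp [hM]
  have hmeas : Measurable (pcode p) := (continuous_pcode p).measurable
  have hle : (M : ℝ≥0∞)⁻¹ • (bern.map (pcode p)) ≤ μH[sdim] := by
    refine Measure.le_hausdorffMeasure sdim _ 1 one_pos fun A hA => ?_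
    have hcl : Metric.ediam (closure A) ≤ 1 := by rwa [Metric.ediam_closure]
    have h3 := hb (closure A) hcl
    rw [Metric.ediam_closure] at h3
    calc ((M : ℝ≥0∞)⁻¹ • (bern.map (pcode p))) A
        ≤ ((M : ℝ≥0∞)⁻¹ • (bern.map (pcode p))) (closure A) := measure_mono subset_closure
      _ = (M : ℝ≥0∞)⁻¹ * bern (pcode p ⁻¹' closure A) := by
          rw [Measure.smul_apply, Measure.map_apply hmeas isClosed_closure.measurableSet,
            smul_eq_mul]
      _ ≤ (M : ℝ≥0∞)⁻¹ * (M * Metric.ediam A ^ sdim) := by gcongr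
      _ = Metric.ediam A ^ sdim := by
          rw [← mul_assoc, ENNReal.inv_mul_cancel hM0 (ENNReal.natCast_ne_top M), one_mul]
  have h4 := hle S
  rw [Measure.smul_apply, Measure.map_apply hmeas hc.isClosed.measurableSet] at h4
  have h5 : pcode p ⁻¹' S = univ := eq_univ_of_forall fun ω => pcode_mem hne hc h ω
  rw [h5, measure_univ, smul_eq_mul, mul_one] at h4
  intro h6
  rw [h6] at h4
  simp at h4

/-- The Hausdorff dimension of the Sierpiński gasket is `log 3 / log 2`. -/
theorem stmt_13 (p : Fin 3 → E2) (SG : Set E2) (hSG : IsSG p SG) :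
    dimH SG = ENNReal.ofReal (Real.log 3 / Real.log 2) := by
  obtain ⟨he, hne, hc, h⟩ := hSG
  have e : ((sdim.toNNReal : ℝ≥0) : ℝ) = sdim := Real.coe_toNNReal _ sdim_pos.le
  refine dimH_of_hausdorffMeasure_ne_zero_ne_top (d := sdim.toNNReal) ?_ ?_
  · rw [e]; exact lower_bound he hne hc h
  · rw [e]; exact upper_bound hc h
end
end
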